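/- There exists a spanning tree T* of G whose diameter is at most twice the generalized radius of G: D(T*) ≤ 2·R_gen(G); such a tree is obtained as a shortest paths tree rooted at an absolute center of G. (In particular, a minimum diameter spanning tree of G can be obtained from an absolute center, so the minimum diameter spanning tree problem reduces to finding an absolute center.) -/

import Mathlib

/-- The weight of a walk: the sum of the weights of its edges. -/
noncomputable def walkWeight {V : Type*} (w : V → V → ℝ) {G : SimpleGraph V} {u v : V}
    (p : G.Walk u v) : ℝ :=
  (p.darts.map fun d => w d.toProd.1 d.toProd.2).sum

/-- The weighted distance between two vertices: the least weight of a walk joining them. -/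
noncomputable def wdist {V : Type*} (G : SimpleGraph V) (w : V → V → ℝ) (u v : V) : ℝ :=
  sInf {x : ℝ | ∃ p : G.Walk u v, walkWeight w p = x}


lemma walkWeight_cons' {V : Type*} (w : V → V → ℝ) {G : SimpleGraph V} {u v x : V}
    (h : G.Adj u v) (p : G.Walk v x) :
    walkWeight w (SimpleGraph.Walk.cons h p) = w u v + walkWeight w p := by
  simp [walkWeight]

lemma walkWeight_nil' {V : Type*} (w : V → V → ℝ) {G : SimpleGraph V} {u : V} :
    walkWeight w (SimpleGraph.Walk.nil : G.Walk u u) = 0 := by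
  simp [walkWeight]

lemma walkWeight_append' {V : Type*} (w : V → V → ℝ) {G : SimpleGraph V} {u v x : V}
    (p : G.Walk u v) (q : G.Walk v x) :
    walkWeight w (p.append q) = walkWeight w p + walkWeight w q := by
  simp [walkWeight]

lemma walkWeight_reverse' {V : Type*} (w : V → V → ℝ) (hws : ∀ a b : V, w a b = w b a)
    {G : SimpleGraph V} {u v : V} (p : G.Walk u v) :
    walkWeight w p.reverse = walkWeight w p := by
  induction p with
  | nil => simp
  | cons h p ih =>
    rw [SimpleGraph.Walk.reverse_cons, walkWeight_append', ih, walkWeight_cons',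
      walkWeight_cons', walkWeight_nil', hws]
    ring

lemma walkWeight_nonneg' {V : Type*} (w : V → V → ℝ) {G : SimpleGraph V}
    (hw : ∀ a b : V, G.Adj a b → 0 < w a b) {u v : V} (p : G.Walk u v) :
    0 ≤ walkWeight w p := by
  induction p with
  | nil => rw [walkWeight_nil']
  | cons h p ih =>
    rw [walkWeight_cons']
    have := hw _ _ h
    linarith

lemma wdist_le' {V : Type*} (w : V → V → ℝ) {G : SimpleGraph V}
    (hw : ∀ a b : V, G.Adj a b → 0 < w a b) {u v : V} (p : G.Walk u v) :
    wdist G w u v ≤ walkWeight w p :=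
  csInf_le ⟨0, by rintro x ⟨q, rfl⟩; exact walkWeight_nonneg' w hw q⟩ ⟨p, rfl⟩

lemma le_wdist' {V : Type*} (w : V → V → ℝ) {G : SimpleGraph V} (hG : G.Connected)
    {u v : V} {c : ℝ} (h : ∀ p : G.Walk u v, c ≤ walkWeight w p) :
    c ≤ wdist G w u v := by
  obtain ⟨p⟩ := hG.preconnected u v
  exact le_csInf ⟨_, p, rfl⟩ (by rintro x ⟨q, rfl⟩; exact h q)

lemma wdist_symm' {V : Type*} (w : V → V → ℝ) (hws : ∀ a b : V, w a b = w b a)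
    {G : SimpleGraph V} (hG : G.Connected)
    (hw : ∀ a b : V, G.Adj a b → 0 < w a b) (u v : V) :
    wdist G w u v = wdist G w v u := by
  apply le_antisymm <;> apply le_wdist' w hG <;> intro p <;>
    rw [← walkWeight_reverse' w hws] <;> exact wdist_le' w hw _

lemma wdist_triangle' {V : Type*} (w : V → V → ℝ)
    {G : SimpleGraph V} (hG : G.Connected)
    (hw : ∀ a b : V, G.Adj a b → 0 < w a b) (u v x : V) :
    wdist G w u x ≤ wdist G w u v + wdist G w v x := by
  rw [← sub_le_iff_le_add]
  apply le_wdist' w hG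
  intro p
  rw [sub_le_iff_le_add, ← sub_le_iff_le_add']
  apply le_wdist' w hG
  intro q
  rw [sub_le_iff_le_add', ← walkWeight_append']
  exact wdist_le' w hw _

lemma wdist_nonneg' {V : Type*} (w : V → V → ℝ)
    {G : SimpleGraph V} (hG : G.Connected)
    (hw : ∀ a b : V, G.Adj a b → 0 < w a b) (u v : V) : 0 ≤ wdist G w u v :=
  le_wdist' w hG fun p => walkWeight_nonneg' w hw p

lemma exists_pred {V : Type*} [Fintype V] (w : V → V → ℝ) (hws : ∀ a b : V, w a b = w b a)
    {G : SimpleGraph V} (hG : G.Connected)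
    (hw : ∀ a b : V, G.Adj a b → 0 < w a b) (a z : V) (hz : z ≠ a) :
    ∃ y, G.Adj z y ∧ w z y + wdist G w a y ≤ wdist G w a z := by
  have hne : {y | G.Adj z y}.Nonempty := by
    obtain ⟨p⟩ := hG.preconnected z a
    cases p with
    | nil => exact absurd rfl hz
    | cons h p => exact ⟨_, h⟩
  obtain ⟨y, hy, hmin⟩ := Set.exists_min_image {y | G.Adj z y}
    (fun y => w z y + wdist G w a y) (Set.toFinite _) hne
  refine ⟨y, hy, ?_⟩
  rw [wdist_symm' w hws hG hw a z]
  apply le_wdist' w hG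
  intro p
  cases p with
  | nil => exact absurd rfl hz
  | cons h p =>
    rw [walkWeight_cons']
    have h1 := hmin _ h
    have h2 := wdist_le' w hw p
    rw [wdist_symm' w hws hG hw] at h2
    linarith

lemma potential_induction {V : Type*} [Fintype V] (g : V → ℝ) (P : V → Prop)
    (h : ∀ z, (∀ y, g y < g z → P y) → P z) (z : V) : P z := by
  have hwf : WellFounded (fun x y : V => g x < g y) :=
    @Finite.wellFounded_of_trans_of_irrefl V _ (fun x y : V => g x < g y)
      ⟨fun _ _ _ h1 h2 => lt_trans h1 h2⟩ ⟨fun _ => lt_irrefl _⟩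
  exact hwf.induction z h

lemma exists_parent_tree {V : Type*} [Fintype V] (G : SimpleGraph V) (r : V) (p : V → V)
    (g : V → ℝ) (hp : ∀ z, z ≠ r → G.Adj z (p z)) (hg : ∀ z, z ≠ r → g (p z) < g z) :
    ∃ T : SimpleGraph V, T ≤ G ∧ T.IsTree ∧ ∀ z, z ≠ r → T.Adj z (p z) := by
  classical
  let T : SimpleGraph V :=
    { Adj := fun x y => (x ≠ r ∧ y = p x) ∨ (y ≠ r ∧ x = p y)
      symm := ⟨fun x y h => h.symm⟩
      loopless := ⟨by
        intro x h
        have : x ≠ r ∧ x = p x := by tauto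
        have h2 := hg x this.1
        rw [← this.2] at h2
        exact lt_irrefl _ h2⟩ }
  have hT : ∀ z, z ≠ r → T.Adj z (p z) := fun z hz => Or.inl ⟨hz, rfl⟩
  have hreach : ∀ z, T.Reachable z r := by
    apply potential_induction g
    intro z ih
    by_cases hz : z = r
    · subst hz; exact SimpleGraph.Reachable.refl _
    · exact (hT z hz).reachable.trans (ih _ (hg z hz))
  have hconn : T.Connected :=
    { preconnected := fun x y => (hreach x).trans (hreach y).symm
      nonempty := ⟨r⟩ }
  refine ⟨T, ?_, ?_, hT⟩
  · rintro x y (⟨h, rfl⟩ | ⟨h, rfl⟩)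
    · exact hp _ h
    · exact (hp _ h).symm
  · rw [SimpleGraph.isTree_iff_connected_and_card]
    refine ⟨hconn, ?_⟩
    have h1 := hconn.card_vert_le_card_edgeSet_add_one
    have hsub : T.edgeSet ⊆ (fun z => s(z, p z)) '' {z | z ≠ r} := by
      intro e
      induction e with
      | _ x y =>
        intro hxy
        have hxy' : (x ≠ r ∧ y = p x) ∨ (y ≠ r ∧ x = p y) := hxy
        rcases hxy' with ⟨h, rfl⟩ | ⟨h, rfl⟩
        · exact ⟨x, h, rfl⟩
        · exact ⟨y, h, Sym2.eq_swap⟩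
    have h2 : T.edgeSet.ncard ≤ {z | z ≠ r}.ncard :=
      (Set.ncard_le_ncard hsub (Set.toFinite _)).trans (Set.ncard_image_le (Set.toFinite _))
    have h3 : ({z | z ≠ r} : Set V).ncard + 1 = Nat.card V := by
      have h := Set.ncard_add_ncard_compl ({r} : Set V)
      rw [Set.ncard_singleton] at h
      have : ({z | z ≠ r} : Set V) = {r}ᶜ := by ext; simp
      rw [this]; omega
    have h4 : T.edgeSet.ncard = Nat.card T.edgeSet := rfl
    omega

lemma exists_spt {V : Type*} [Fintype V] (w : V → V → ℝ) (hws : ∀ a b : V, w a b = w b a)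
    {G : SimpleGraph V} (hG : G.Connected)
    (hw : ∀ a b : V, G.Adj a b → 0 < w a b) (a : V) :
    ∃ T : SimpleGraph V, T ≤ G ∧ T.IsTree ∧
      ∀ x y, wdist T w x y ≤ wdist G w a x + wdist G w a y := by
  classical
  have hpr : ∀ z, ∃ y, z ≠ a → G.Adj z y ∧ w z y + wdist G w a y ≤ wdist G w a z := by
    intro z
    by_cases hz : z = a
    · exact ⟨z, fun h => absurd hz h⟩
    · obtain ⟨y, hy⟩ := exists_pred w hws hG hw a z hz
      exact ⟨y, fun _ => hy⟩
  choose p hp using hpr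
  have hlt : ∀ z, z ≠ a → wdist G w a (p z) < wdist G w a z := by
    intro z hz
    have h1 := hw _ _ (hp z hz).1
    have h2 := (hp z hz).2
    linarith
  obtain ⟨T, hTG, hT, hTp⟩ := exists_parent_tree G a p (fun z => wdist G w a z)
    (fun z hz => (hp z hz).1) hlt
  refine ⟨T, hTG, hT, ?_⟩
  have key : ∀ z, ∃ q : T.Walk z a, walkWeight w q ≤ wdist G w a z := by
    apply potential_induction (fun z => wdist G w a z)
    intro z ih
    by_cases hz : z = a
    · subst hz
      exact ⟨SimpleGraph.Walk.nil, by
        rw [walkWeight_nil']; exact wdist_nonneg' w hG hw _ _⟩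
    · obtain ⟨q, hq⟩ := ih _ (hlt z hz)
      refine ⟨SimpleGraph.Walk.cons (hTp z hz) q, ?_⟩
      rw [walkWeight_cons']
      have := (hp z hz).2
      linarith
  intro x y
  obtain ⟨q1, h1⟩ := key x
  obtain ⟨q2, h2⟩ := key y
  have h3 := wdist_le' w (fun a b h => hw a b (hTG h)) (q1.append q2.reverse)
  rw [walkWeight_append', walkWeight_reverse' w hws] at h3
  linarith

lemma exists_tree_point {V : Type*} [Fintype V] (w : V → V → ℝ)
    (hws : ∀ a b : V, w a b = w b a)
    {G : SimpleGraph V} (hG : G.Connected)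
    (hw : ∀ a b : V, G.Adj a b → 0 < w a b) (a b : V) (hab : G.Adj a b)
    (α : ℝ) (h0 : 0 ≤ α) (h1 : α ≤ w a b) (f : V → ℝ)
    (hf : ∀ z, f z = min (α + wdist G w a z) (w a b - α + wdist G w b z)) :
    ∃ T : SimpleGraph V, T ≤ G ∧ T.IsTree ∧ ∀ x y, wdist T w x y ≤ f x + f y := by
  classical
  by_cases hA : α + wdist G w a b ≤ w a b - α
  · obtain ⟨T, hTG, hT, hd⟩ := exists_spt w hws hG hw a
    refine ⟨T, hTG, hT, fun x y => (hd x y).trans ?_⟩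
    have : ∀ z, wdist G w a z ≤ f z := by
      intro z
      have := wdist_triangle' w hG hw a b z
      rw [hf]
      apply le_min <;> linarith
    exact add_le_add (this x) (this y)
  by_cases hB : w a b - α + wdist G w b a ≤ α
  · obtain ⟨T, hTG, hT, hd⟩ := exists_spt w hws hG hw b
    refine ⟨T, hTG, hT, fun x y => (hd x y).trans ?_⟩
    have : ∀ z, wdist G w b z ≤ f z := by
      intro z
      have := wdist_triangle' w hG hw b a z
      rw [hf]
      apply le_min <;> linarith
    exact add_le_add (this x) (this y)
  push Not at hA hB
  have hfa : α ≤ f a := by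
    have := wdist_nonneg' w hG hw a a
    rw [hf]; apply le_min <;> linarith
  have hfb : w a b - α ≤ f b := by
    have := wdist_nonneg' w hG hw b b
    rw [hf]; apply le_min <;> linarith
  have hf0 : ∀ z, 0 ≤ f z := by
    intro z
    have := wdist_nonneg' w hG hw a z
    have := wdist_nonneg' w hG hw b z
    rw [hf]; apply le_min <;> linarith
  have hpr : ∀ z, ∃ y, (z = b → y = a) ∧
      (z ≠ a → z ≠ b → G.Adj z y ∧ w z y + f y ≤ f z) := by
    intro z
    by_cases hzb : z = b
    · exact ⟨a, fun _ => rfl, fun _ h => absurd hzb h⟩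
    by_cases hza : z = a
    · exact ⟨z, fun h => absurd h hzb, fun h => absurd hza h⟩
    rcases le_total (α + wdist G w a z) (w a b - α + wdist G w b z) with h | h
    · obtain ⟨y, hy, hle⟩ := exists_pred w hws hG hw a z hza
      refine ⟨y, fun h => absurd h hzb, fun _ _ => ⟨hy, ?_⟩⟩
      have h5 : f y ≤ α + wdist G w a y := by rw [hf]; exact min_le_left _ _
      rw [hf z, min_eq_left h]
      linarith
    · obtain ⟨y, hy, hle⟩ := exists_pred w hws hG hw b z hzb
      refine ⟨y, fun h => absurd h hzb, fun _ _ => ⟨hy, ?_⟩⟩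
      have h5 : f y ≤ w a b - α + wdist G w b y := by rw [hf]; exact min_le_right _ _
      rw [hf z, min_eq_right h]
      linarith
  choose p hpb hp using hpr
  have hlt : ∀ z, z ≠ a → z ≠ b → f (p z) < f z := by
    intro z hz hz'
    have h1 := hw _ _ (hp z hz hz').1
    have h2 := (hp z hz hz').2
    linarith
  obtain ⟨T, hTG, hT, hTp⟩ := exists_parent_tree G a p (fun z => if z = a then -1 else f z)
    (by
      intro z hz
      by_cases hzb : z = b
      · rw [hpb z hzb, hzb]; exact hab.symm
      · exact (hp z hz hzb).1)
    (by
      intro z hz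
      rw [if_neg hz]
      by_cases hpa : p z = a
      · rw [if_pos hpa]
        have := hf0 z
        linarith
      · rw [if_neg hpa]
        exact hlt z hz (fun h => hpa (hpb z h)))
  refine ⟨T, hTG, hT, ?_⟩
  have hTab : T.Adj b a := by
    have := hTp b hab.ne'
    rwa [hpb b rfl] at this
  have key : ∀ z, (∃ q : T.Walk z a, walkWeight w q ≤ f z - α) ∨
      (∃ q : T.Walk z b, walkWeight w q ≤ f z - (w a b - α)) := by
    apply potential_induction f
    intro z ih
    by_cases hza : z = a
    · subst hza
      exact Or.inl ⟨SimpleGraph.Walk.nil, by rw [walkWeight_nil']; linarith⟩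
    by_cases hzb : z = b
    · subst hzb
      exact Or.inr ⟨SimpleGraph.Walk.nil, by rw [walkWeight_nil']; linarith⟩
    have hle := (hp z hza hzb).2
    rcases ih _ (hlt z hza hzb) with ⟨q, hq⟩ | ⟨q, hq⟩
    · refine Or.inl ⟨SimpleGraph.Walk.cons (hTp z hza) q, ?_⟩
      rw [walkWeight_cons']
      linarith
    · refine Or.inr ⟨SimpleGraph.Walk.cons (hTp z hza) q, ?_⟩
      rw [walkWeight_cons']
      linarith
  have hwT : ∀ a b, T.Adj a b → 0 < w a b := fun a b h => hw a b (hTG h)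
  intro x y
  rcases key x with ⟨q1, h1⟩ | ⟨q1, h1⟩ <;> rcases key y with ⟨q2, h2⟩ | ⟨q2, h2⟩
  · have h3 := wdist_le' w hwT (q1.append q2.reverse)
    rw [walkWeight_append', walkWeight_reverse' w hws] at h3
    linarith
  · have h3 := wdist_le' w hwT (q1.append (SimpleGraph.Walk.cons hTab.symm q2.reverse))
    rw [walkWeight_append', walkWeight_cons', walkWeight_reverse' w hws] at h3
    linarith
  · have h3 := wdist_le' w hwT (q1.append (SimpleGraph.Walk.cons hTab q2.reverse))
    rw [walkWeight_append', walkWeight_cons', walkWeight_reverse' w hws, hws b a] at h3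
    linarith
  · have h3 := wdist_le' w hwT (q1.append q2.reverse)
    rw [walkWeight_append', walkWeight_reverse' w hws] at h3
    linarith

/-- There exists a spanning tree `T*` of `G` whose diameter is at most twice
the generalized radius of `G` (such a tree is obtained as a shortest paths tree
rooted at an absolute center of `G`); in particular the minimum diameter
spanning tree problem reduces to finding an absolute center. -/
theorem stmt16 {V : Type*} [Fintype V] (G : SimpleGraph V) (hG : G.Connected)
    (w : V → V → ℝ) (hw : ∀ a b : V, G.Adj a b → 0 < w a b)
    (hws : ∀ a b : V, w a b = w b a)
    (hE : ∃ a b : V, G.Adj a b) :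
    ∃ T : SimpleGraph V, T ≤ G ∧ T.IsTree ∧
      (⨆ u : V, ⨆ v : V, wdist T w u v) ≤
        2 * sInf {x : ℝ | ∃ a b : V, G.Adj a b ∧ ∃ α ∈ Set.Icc 0 (w a b),
          x = ⨆ z : V, min (α + wdist G w a z) (w a b - α + wdist G w b z)} := by
  haveI : Nonempty V := hG.nonempty
  have main : ∀ x ∈ {x : ℝ | ∃ a b : V, G.Adj a b ∧ ∃ α ∈ Set.Icc 0 (w a b),
          x = ⨆ z : V, min (α + wdist G w a z) (w a b - α + wdist G w b z)},
      ∃ T ∈ {T : SimpleGraph V | T ≤ G ∧ T.IsTree},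
        (⨆ u : V, ⨆ v : V, wdist T w u v) ≤ 2 * x := by
    rintro x ⟨a, b, hab, α, ⟨h0, h1⟩, rfl⟩
    obtain ⟨T, hTG, hT, hd⟩ := exists_tree_point w hws hG hw a b hab α h0 h1 _ (fun _ => rfl)
    refine ⟨T, ⟨hTG, hT⟩, ciSup_le fun u => ciSup_le fun v => (hd u v).trans ?_⟩
    have hle : ∀ z, min (α + wdist G w a z) (w a b - α + wdist G w b z) ≤
        ⨆ z : V, min (α + wdist G w a z) (w a b - α + wdist G w b z) :=
      fun z => le_ciSup (f := fun z => min (α + wdist G w a z) (w a b - α + wdist G w b z))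
        (Set.finite_range _).bddAbove z
    have h2 := hle u
    have h3 := hle v
    linarith
  obtain ⟨a, b, hab⟩ := hE
  have hmem : (⨆ z : V, min (0 + wdist G w a z) (w a b - 0 + wdist G w b z)) ∈
      {x : ℝ | ∃ a b : V, G.Adj a b ∧ ∃ α ∈ Set.Icc 0 (w a b),
          x = ⨆ z : V, min (α + wdist G w a z) (w a b - α + wdist G w b z)} :=
    ⟨a, b, hab, 0, ⟨le_rfl, (hw a b hab).le⟩, rfl⟩
  obtain ⟨T0, hT0, -⟩ := main _ hmem
  obtain ⟨T, hT, hmin⟩ := Set.exists_min_image {T : SimpleGraph V | T ≤ G ∧ T.IsTree}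
    (fun T => ⨆ u : V, ⨆ v : V, wdist T w u v) (Set.toFinite _) ⟨T0, hT0⟩
  refine ⟨T, hT.1, hT.2, ?_⟩
  have hfin : (⨆ u : V, ⨆ v : V, wdist T w u v) / 2 ≤
      sInf {x : ℝ | ∃ a b : V, G.Adj a b ∧ ∃ α ∈ Set.Icc 0 (w a b),
          x = ⨆ z : V, min (α + wdist G w a z) (w a b - α + wdist G w b z)} := by
    apply le_csInf ⟨_, hmem⟩
    intro x hx
    obtain ⟨T', hT', hle⟩ := main x hx
    have := hmin T' hT'
    linarith
  linarith
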